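/- Let n ≥ 2 be a natural number and suppose m is the least natural number with T^[m](3^n − 1) = 1. Then 2n + m is the least natural number k with T^[k](2^n − 1) = 1; equivalently, the Collatz–Kakutani path length of the Mersenne number satisfies D(2^n − 1) = 2n + D(3^n − 1). -/

import Mathlib

/-- The Collatz map: `T x = x / 2` if `x` is even, `3 * x + 1` if `x` is odd. -/
def T (x : ℕ) : ℕ := if x % 2 = 0 then x / 2 else 3 * x + 1

/-!
Two Collatz steps take the odd number `2 * b - 1` to `3 * b - 1`, that is, they multiply `x + 1`
by `3 / 2`. Starting from `a * 2 ^ n - 1` this can be done `n` times, which trades every factor `2`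
for a factor `3` and ends at `a * 3 ^ n - 1`. The odd numbers met on the way only grow, so none
of them is `1` if the first is not, and exactly `2 * n` steps are added to the path length.
-/

theorem isLeast_iterate_mem_add_one_iff {α : Type*} {f : α → α} {s : Set α} {x : α} {m : ℕ}
    (hx : x ∉ s) :
    IsLeast {k | f^[k] x ∈ s} (m + 1) ↔ IsLeast {k | f^[k] (f x) ∈ s} m := by
  refine and_congr Iff.rfl ⟨fun h k hk => Nat.succ_le_succ_iff.mp (h hk), fun h k hk => ?_⟩
  cases k with
  | zero => exact absurd hk hx
  | succ k => exact Nat.succ_le_succ (h hk)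

theorem T_two_mul (b : ℕ) : T (2 * b) = b := by
  simp [T]

theorem T_two_mul_add_one (b : ℕ) : T (2 * b + 1) = 2 * (3 * b + 2) := by
  rw [T, if_neg (by omega)]
  ring

/-- The relation `D(x) = k` for the Collatz–Kakutani path length `D`, stated as a relation because
`D(x)` is defined only when the orbit of `x` reaches `1`. -/
def IsPathLength (x k : ℕ) : Prop := IsLeast {j | T^[j] x = 1} k

theorem isPathLength_add_one_iff {x m : ℕ} (hx : x ≠ 1) :
    IsPathLength x (m + 1) ↔ IsPathLength (T x) m :=
  isLeast_iterate_mem_add_one_iff (s := {1}) hx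

theorem isPathLength_two_mul_sub_one_iff {b m : ℕ} (hb : 2 ≤ b) :
    IsPathLength (2 * b - 1) (m + 2) ↔ IsPathLength (3 * b - 1) m := by
  obtain ⟨c, rfl⟩ : ∃ c, b = c + 1 := Nat.exists_eq_add_of_le' (by omega)
  calc IsPathLength (2 * c + 1) (m + 1 + 1)
    _ ↔ IsPathLength (2 * (3 * c + 2)) (m + 1) := by
      rw [isPathLength_add_one_iff (by omega), T_two_mul_add_one]
    _ ↔ IsPathLength (3 * c + 2) m := by
      rw [isPathLength_add_one_iff (by omega), T_two_mul]

theorem mersenne_path_length_decomposition_general {a n m : ℕ} (h : 2 < a * 2 ^ n) :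
    IsPathLength (a * 2 ^ n - 1) (2 * n + m) ↔ IsPathLength (a * 3 ^ n - 1) m := by
  induction n generalizing a with
  | zero => simp
  | succ n ih =>
    have h_double : a * 2 ^ (n + 1) = 2 * (a * 2 ^ n) := by ring
    calc IsPathLength (a * 2 ^ (n + 1) - 1) (2 * (n + 1) + m)
      _ ↔ IsPathLength (2 * (a * 2 ^ n) - 1) (2 * n + m + 2) := by
        rw [h_double, show 2 * (n + 1) + m = 2 * n + m + 2 by ring]
      _ ↔ IsPathLength (3 * a * 2 ^ n - 1) (2 * n + m) := by
        rw [isPathLength_two_mul_sub_one_iff (by omega), mul_assoc]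
      _ ↔ IsPathLength (3 * a * 3 ^ n - 1) m := ih (by rw [mul_assoc]; omega)
      _ ↔ IsPathLength (a * 3 ^ (n + 1) - 1) m := by
        rw [show 3 * a * 3 ^ n = a * 3 ^ (n + 1) by ring]

theorem mersenne_path_length_decomposition (n m : ℕ) (hn : 2 ≤ n)
    (hm : IsLeast {k : ℕ | T^[k] (3 ^ n - 1) = 1} m) :
    IsLeast {k : ℕ | T^[k] (2 ^ n - 1) = 1} (2 * n + m) := by
  have h : 2 < 1 * 2 ^ n := by simpa using lt_self_pow₀ one_lt_two hn
  have h_iff := mersenne_path_length_decomposition_general (m := m) h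
  rw [one_mul, one_mul] at h_iff
  exact h_iff.mpr hm
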